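/- Let f and g be two S¹-embeddings of the complete bipartite graph K_{3,2} that differ by a single exchange of two vertices, i.e., g = f ∘ τ for some transposition τ of two vertices of K_{3,2}. Then the number of unordered pairs of disjoint edges of K_{3,2} forming a non-split link in f and the corresponding number for g have the same parity. -/

import Mathlib

/-- `f a` and `f b` lie in different connected components of `S¹ \ {f c, f d}`. -/
def NonSplitLink {V : Type*} (f : V → Circle) (a b c d : V) : Prop :=
  connectedComponentIn ({f c, f d}ᶜ : Set Circle) (f a) ≠
    connectedComponentIn ({f c, f d}ᶜ : Set Circle) (f b)

/-- A graph is intrinsically S¹-linked if for every S¹-embedding (injective map of its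
vertices to the circle) there is a pair of disjoint edges forming a non-split link. -/
def IntrinsicallyS1Linked {V : Type*} (G : SimpleGraph V) : Prop :=
  ∀ f : V → Circle, Function.Injective f →
    ∃ a b c d : V, G.Adj a b ∧ G.Adj c d ∧
      ({a, b} : Set V) ∩ ({c, d} : Set V) = ∅ ∧
      NonSplitLink f a b c d

/-- The set of unordered pairs of disjoint edges of `G` forming a non-split link in the
S¹-embedding `f`. -/
def linkedPairs {V : Type*} (G : SimpleGraph V) (f : V → Circle) : Set (Sym2 (Sym2 V)) :=
  {p | ∃ a b c d : V, p = s(s(a, b), s(c, d)) ∧ G.Adj a b ∧ G.Adj c d ∧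
    ({a, b} : Set V) ∩ ({c, d} : Set V) = ∅ ∧ NonSplitLink f a b c d}

/-!
Let `aᵢ` be the `n` left and `b₀`, `b₁` the two right vertices of `K_{n,2}`. The pairs of disjoint
edges are `{aᵢb₀, aⱼb₁}` with `i ≠ j`; let `P i j` say that this pair is linked. Among the three
ways of splitting four points of the circle into two pairs exactly one is linked, so, modulo two,
`P i j + P j i` is `0` if `b₀` and `b₁` separate `aᵢ` from `aⱼ`, and `1` otherwise. Let `B i` say
that `aᵢ` lies on one fixed arc of the circle cut at `b₀` and `b₁`. Adding `B i ∧ ¬B j` to `P i j`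
modulo two produces a tournament, which contains `n.choose 2` ordered pairs, and changes the count
by `k * (n - k)` modulo two, where `k` is the number of `i` with `B i`. For odd `n` this product is
even, so the number of linked pairs has the parity of `n.choose 2` for every embedding.
-/

open Set Function
open scoped Finset Real

section Topology

variable {X : Type*} [TopologicalSpace X] {U W : Set X} {x y : X}

theorem connectedComponentIn_union_eq_left (hU : IsOpen U) (hW : IsOpen W) (hUW : Disjoint U W)
    (hUc : IsPreconnected U) (hx : x ∈ U) : connectedComponentIn (U ∪ W) x = U := by
  have hxUW : x ∈ U ∪ W := Or.inl hx
  apply Subset.antisymm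
  · exact isPreconnected_connectedComponentIn.subset_left_of_subset_union hU hW hUW
      (connectedComponentIn_subset _ x) ⟨x, mem_connectedComponentIn hxUW, hx⟩
  · exact hUc.subset_connectedComponentIn hx subset_union_left

theorem connectedComponentIn_union_ne_iff_xor (hU : IsOpen U) (hW : IsOpen W)
    (hUW : Disjoint U W) (hUc : IsPreconnected U) (hWc : IsPreconnected W)
    (hx : x ∈ U ∪ W) (hy : y ∈ U ∪ W) :
    connectedComponentIn (U ∪ W) x ≠ connectedComponentIn (U ∪ W) y ↔ Xor (x ∈ U) (y ∈ U) := by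
  have component_left {z : X} (hz : z ∈ U) : connectedComponentIn (U ∪ W) z = U :=
    connectedComponentIn_union_eq_left hU hW hUW hUc hz
  have component_right {z : X} (hz : z ∈ W) : connectedComponentIn (U ∪ W) z = W := by
    rw [union_comm]
    exact connectedComponentIn_union_eq_left hW hU hUW.symm hWc hz
  have notMem_left {z : X} (hz : z ∈ W) : z ∉ U := hUW.notMem_of_mem_right hz
  rcases hx with hx | hx <;> rcases hy with hy | hy
  · simp [component_left, hx, hy]
  · have hne : U ≠ W := fun h ↦ notMem_left hy (h ▸ hy)
    simp [component_left hx, component_right hy, hx, notMem_left hy, hne]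
  · have hne : W ≠ U := fun h ↦ notMem_left hx (h ▸ hx)
    simp [component_right hx, component_left hy, hy, notMem_left hx, hne]
  · simp [component_right, notMem_left, hx, hy]

end Topology

section Circle

theorem circleExp_image_Ioo {α β : ℝ} (hα : -π ≤ α) (hβ : β ≤ π) :
    Circle.exp '' Ioo α β = {z : Circle | Complex.arg z ∈ Ioo α β} := by
  ext z
  constructor
  · rintro ⟨t, ht, rfl⟩
    rwa [mem_ofPred_eq, Circle.arg_exp (hα.trans_lt ht.1) (ht.2.le.trans hβ)]
  · exact fun hz ↦ ⟨Complex.arg z, hz, Circle.exp_arg z⟩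

theorem circleExp_image_Ioo_add_two_pi {α β : ℝ} (hα : -π < α) (hαβ : α ≤ β) (hβ : β ≤ π) :
    Circle.exp '' Ioo β (α + 2 * π) = {z : Circle | Complex.arg z ∉ Icc α β} := by
  ext z
  constructor
  · rintro ⟨t, ⟨hβt, htα⟩, rfl⟩ ⟨hα_arg, harg_β⟩
    rcases le_or_gt t π with ht | ht
    · rw [Circle.arg_exp (by linarith) ht] at harg_β
      linarith
    · rw [← Circle.exp_sub_two_pi t, Circle.arg_exp (by linarith) (by linarith)] at hα_arg
      linarith
  · intro hz
    have hneg := Complex.neg_pi_lt_arg (z : ℂ)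
    have hle := Complex.arg_le_pi (z : ℂ)
    rcases lt_or_ge β (Complex.arg z) with h | h
    · exact ⟨Complex.arg z, ⟨h, by linarith⟩, Circle.exp_arg z⟩
    · have hlt : Complex.arg z < α := lt_of_not_ge fun hge ↦ hz ⟨hge, h⟩
      exact ⟨Complex.arg z + 2 * π, ⟨by linarith, by linarith⟩, by
        rw [Circle.exp_add_two_pi, Circle.exp_arg]⟩

theorem isOpen_circleExp_image_Ioo (α β : ℝ) : IsOpen (Circle.exp '' Ioo α β) :=
  isLocalHomeomorph_circleExp.isOpenMap _ isOpen_Ioo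

theorem isPreconnected_circleExp_image_Ioo (α β : ℝ) : IsPreconnected (Circle.exp '' Ioo α β) :=
  isPreconnected_Ioo.image _ Circle.exp.continuous.continuousOn

theorem circle_compl_pair_eq_union_circleExp_image {c d : Circle}
    (hcd : Complex.arg c ≤ Complex.arg d) :
    ({c, d}ᶜ : Set Circle) = Circle.exp '' Ioo (Complex.arg c) (Complex.arg d) ∪
      Circle.exp '' Ioo (Complex.arg d) (Complex.arg c + 2 * π) := by
  rw [circleExp_image_Ioo (Complex.neg_pi_lt_arg _).le (Complex.arg_le_pi _),
    circleExp_image_Ioo_add_two_pi (Complex.neg_pi_lt_arg _) hcd (Complex.arg_le_pi _)]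
  ext z
  rw [mem_compl_iff, mem_insert_iff, mem_singleton_iff, ← Circle.arg_eq_arg,
    ← Circle.arg_eq_arg (w := d)]
  simp only [mem_union, mem_ofPred_eq, mem_Ioo, mem_Icc]
  grind

theorem disjoint_circleExp_image_Ioo (α β : ℝ) :
    Disjoint (Circle.exp '' Ioo α β) (Circle.exp '' Ioo β (α + 2 * π)) := by
  have hinj : InjOn Circle.exp (Ico α (α + 2 * π)) := Circle.exp_injOn_Ico (by simp)
  rw [disjoint_left]
  rintro _ ⟨t, ht, rfl⟩ ⟨u, hu, hut⟩
  have htu : u = t :=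
    hinj ⟨(ht.1.trans (ht.2.trans hu.1)).le, hu.2⟩ ⟨ht.1.le, ht.2.trans (hu.1.trans hu.2)⟩ hut
  linarith [ht.2, hu.1]

theorem connectedComponentIn_compl_pair_ne_iff_xor {p q c d : Circle}
    (hp : p ∈ ({c, d}ᶜ : Set Circle)) (hq : q ∈ ({c, d}ᶜ : Set Circle)) :
    connectedComponentIn {c, d}ᶜ p ≠ connectedComponentIn {c, d}ᶜ q ↔
      Xor (Complex.arg p ∈ uIoo (Complex.arg c) (Complex.arg d))
        (Complex.arg q ∈ uIoo (Complex.arg c) (Complex.arg d)) := by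
  wlog hcd : Complex.arg c ≤ Complex.arg d generalizing c d
  · rw [pair_comm, uIoo_comm]
    rw [pair_comm] at hp hq
    exact this hp hq (le_of_not_ge hcd)
  have hc := Complex.neg_pi_lt_arg (c : ℂ)
  have hd := Complex.arg_le_pi (d : ℂ)
  rw [circle_compl_pair_eq_union_circleExp_image hcd] at hp hq ⊢
  rw [connectedComponentIn_union_ne_iff_xor (isOpen_circleExp_image_Ioo _ _)
    (isOpen_circleExp_image_Ioo _ _) (disjoint_circleExp_image_Ioo _ _)
    (isPreconnected_circleExp_image_Ioo _ _) (isPreconnected_circleExp_image_Ioo _ _) hp hq,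
    circleExp_image_Ioo hc.le hd, uIoo_of_le hcd]
  rfl

end Circle

section LinearOrder

variable {α : Type*} [LinearOrder α] {a b c d : α}

theorem xor_mem_uIoo_comm (hac : a ≠ c) (had : a ≠ d) (hbc : b ≠ c) (hbd : b ≠ d) :
    Xor (a ∈ uIoo c d) (b ∈ uIoo c d) ↔ Xor (c ∈ uIoo a b) (d ∈ uIoo a b) := by
  simp only [uIoo, mem_Ioo, inf_lt_iff, lt_sup_iff]
  grind

/-- Of the three ways to split four points into two pairs, exactly one interleaves; the nested
`Xor` only records that the number of interleaving ones is odd. -/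
theorem xor_mem_uIoo_matchings (hab : a ≠ b) (hac : a ≠ c) (had : a ≠ d) (hbc : b ≠ c)
    (hbd : b ≠ d) (hcd : c ≠ d) :
    Xor (Xor (a ∈ uIoo c d) (b ∈ uIoo c d))
      (Xor (Xor (a ∈ uIoo b d) (c ∈ uIoo b d)) (Xor (b ∈ uIoo a d) (c ∈ uIoo a d))) := by
  simp only [uIoo, mem_Ioo, inf_lt_iff, lt_sup_iff]
  grind

end LinearOrder

section NonSplitLink

variable {V : Type*} {f : V → Circle} {a b c d : V}

theorem nonSplitLink_iff_xor_arg_mem_uIoo (hf : Injective f) (hac : a ≠ c) (had : a ≠ d)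
    (hbc : b ≠ c) (hbd : b ≠ d) :
    NonSplitLink f a b c d ↔
      Xor (Complex.arg (f a) ∈ uIoo (Complex.arg (f c)) (Complex.arg (f d)))
        (Complex.arg (f b) ∈ uIoo (Complex.arg (f c)) (Complex.arg (f d))) :=
  connectedComponentIn_compl_pair_ne_iff_xor (by simp [hf.eq_iff, hac, had])
    (by simp [hf.eq_iff, hbc, hbd])

theorem nonSplitLink_swap_left : NonSplitLink f a b c d ↔ NonSplitLink f b a c d :=
  ne_comm

theorem nonSplitLink_swap_right : NonSplitLink f a b c d ↔ NonSplitLink f a b d c := by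
  rw [NonSplitLink, NonSplitLink, pair_comm]

theorem nonSplitLink_comm (hf : Injective f) (hac : a ≠ c) (had : a ≠ d) (hbc : b ≠ c)
    (hbd : b ≠ d) : NonSplitLink f a b c d ↔ NonSplitLink f c d a b := by
  have harg : Injective fun v ↦ Complex.arg (f v) := Circle.injective_arg.comp hf
  rw [nonSplitLink_iff_xor_arg_mem_uIoo hf hac had hbc hbd,
    nonSplitLink_iff_xor_arg_mem_uIoo hf hac.symm hbc.symm had.symm hbd.symm]
  exact xor_mem_uIoo_comm (harg.ne hac) (harg.ne had) (harg.ne hbc) (harg.ne hbd)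

theorem xor_nonSplitLink_matchings (hf : Injective f) (hab : a ≠ b) (hac : a ≠ c) (had : a ≠ d)
    (hbc : b ≠ c) (hbd : b ≠ d) (hcd : c ≠ d) :
    Xor (NonSplitLink f a b c d) (Xor (NonSplitLink f a c b d) (NonSplitLink f b c a d)) := by
  have harg : Injective fun v ↦ Complex.arg (f v) := Circle.injective_arg.comp hf
  rw [nonSplitLink_iff_xor_arg_mem_uIoo hf hac had hbc hbd,
    nonSplitLink_iff_xor_arg_mem_uIoo hf hab had hbc.symm hcd,
    nonSplitLink_iff_xor_arg_mem_uIoo hf hab.symm hbd hac.symm hcd]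
  exact xor_mem_uIoo_matchings (harg.ne hab) (harg.ne hac) (harg.ne had) (harg.ne hbc)
    (harg.ne hbd) (harg.ne hcd)

theorem mk_mem_linkedPairs_iff {G : SimpleGraph V} (hf : Injective f) :
    s(s(a, b), s(c, d)) ∈ linkedPairs G f ↔
      G.Adj a b ∧ G.Adj c d ∧ Disjoint ({a, b} : Set V) {c, d} ∧ NonSplitLink f a b c d := by
  have hdisj {a b c d : V} :
      ({a, b} : Set V) ∩ {c, d} = ∅ ↔ a ≠ c ∧ a ≠ d ∧ b ≠ c ∧ b ≠ d := by
    rw [← disjoint_iff_inter_eq_empty]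
    simp only [disjoint_insert_left, disjoint_singleton_left, mem_insert_iff, mem_singleton_iff]
    tauto
  rw [disjoint_iff_inter_eq_empty, hdisj]
  constructor
  · rintro ⟨a', b', c', d', h, hab, hcd, hne, hlink⟩
    rw [hdisj] at hne
    simp only [Sym2.eq_iff] at h
    grind [SimpleGraph.adj_comm, nonSplitLink_swap_left, nonSplitLink_swap_right,
      nonSplitLink_comm hf]
  · rintro ⟨hab, hcd, hne, hlink⟩
    exact ⟨a, b, c, d, rfl, hab, hcd, hdisj.2 hne, hlink⟩

end NonSplitLink

section Counting

variable {ι : Type*} {s : Finset ι}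

theorem card_offDiag_filter_of_xor_swap {R : ι → ι → Prop} [DecidableRel R]
    (hR : ∀ i ∈ s, ∀ j ∈ s, i ≠ j → Xor (R i j) (R j i)) :
    #{p ∈ s.offDiag | R p.1 p.2} = (#s).choose 2 := by
  have hswap : #{p ∈ s.offDiag | R p.1 p.2} = #{p ∈ s.offDiag | ¬R p.1 p.2} :=
    Finset.card_equiv (Equiv.prodComm ι ι) (by grind)
  have hadd := Finset.card_filter_add_card_filter_not (s := s.offDiag) fun p ↦ R p.1 p.2
  grind [Nat.mul_sub_one, Finset.offDiag_card, Nat.choose_two_right]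

theorem card_filter_xor_modEq_add (p q : ι → Prop) [DecidablePred p] [DecidablePred q] :
    #{i ∈ s | Xor (p i) (q i)} ≡ #{i ∈ s | p i} + #{i ∈ s | q i} [MOD 2] := by
  have hxor : #{i ∈ s | Xor (p i) (q i)} = #{i ∈ s | p i ∧ ¬q i} + #{i ∈ s | q i ∧ ¬p i} := by
    simpa only [Finset.card_eq_sum_ones] using
      Finset.sum_filter_xor (s := s) (f := fun _ ↦ 1) p q
  have hp := Finset.card_filter_add_card_filter_not (s := {i ∈ s | p i}) q
  have hq := Finset.card_filter_add_card_filter_not (s := {i ∈ s | q i}) p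
  simp only [Finset.filter_filter, and_comm (a := q _) (b := p _)] at hp hq
  grind [Nat.ModEq]

theorem even_card_offDiag_filter_and_not (hs : Odd #s) (B : ι → Prop) [DecidablePred B] :
    Even #{p ∈ s.offDiag | B p.1 ∧ ¬B p.2} := by
  have hprod : {p ∈ s.offDiag | B p.1 ∧ ¬B p.2} = {i ∈ s | B i} ×ˢ {i ∈ s | ¬B i} := by
    grind
  rw [hprod, Finset.card_product, Nat.even_mul]
  rw [← Finset.card_filter_add_card_filter_not B] at hs
  grind

theorem card_offDiag_filter_modEq_choose_two (hs : Odd #s) {P : ι → ι → Prop} [DecidableRel P]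
    (B : ι → Prop)
    (hP : ∀ i ∈ s, ∀ j ∈ s, i ≠ j → Xor (Xor (B i) (B j)) (Xor (P i j) (P j i))) :
    #{p ∈ s.offDiag | P p.1 p.2} ≡ (#s).choose 2 [MOD 2] := by
  classical
  have htournament : #{p ∈ s.offDiag | Xor (P p.1 p.2) (B p.1 ∧ ¬B p.2)} = (#s).choose 2 :=
    card_offDiag_filter_of_xor_swap (R := fun i j ↦ Xor (P i j) (B i ∧ ¬B j)) (by grind)
  have heven := even_card_offDiag_filter_and_not hs B
  calc #{p ∈ s.offDiag | P p.1 p.2}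
      ≡ #{p ∈ s.offDiag | P p.1 p.2} + #{p ∈ s.offDiag | B p.1 ∧ ¬B p.2} [MOD 2] :=
        (heven.two_dvd.zero_modEq_nat).add_left _
    _ ≡ #{p ∈ s.offDiag | Xor (P p.1 p.2) (B p.1 ∧ ¬B p.2)} [MOD 2] :=
        (card_filter_xor_modEq_add _ _).symm
    _ = (#s).choose 2 := htournament

end Counting

section CompleteBipartite

variable {α : Type*} {f : α ⊕ Fin 2 → Circle}

/-- The pair of edges `{i, 0}`, `{j, 1}` of `K_{α,2}`. For `i ≠ j` the edges are disjoint, and each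
unordered pair of disjoint edges arises from exactly one ordered pair `(i, j)`, since the edge
through the vertex `0` of the right part comes first. -/
def edgePair (ij : α × α) : Sym2 (Sym2 (α ⊕ Fin 2)) :=
  s(s(Sum.inl ij.1, Sum.inr 0), s(Sum.inl ij.2, Sum.inr 1))

theorem edgePair_injective : Injective (edgePair (α := α)) := by
  rintro ⟨i, j⟩ ⟨k, l⟩ h
  simpa [edgePair] using h

theorem completeBipartiteGraph_adj_iff_exists {α β : Type*} {a b : α ⊕ β} :
    (completeBipartiteGraph α β).Adj a b ↔ ∃ i k, s(a, b) = s(Sum.inl i, Sum.inr k) := by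
  rcases a with a | a <;> rcases b with b | b <;> simp

theorem linkedPairs_subset_range_edgePair :
    linkedPairs (completeBipartiteGraph α (Fin 2)) f ⊆ range edgePair := by
  rintro _ ⟨a, b, c, d, rfl, hab, hcd, hdisj, -⟩
  obtain ⟨i, k, hik⟩ := completeBipartiteGraph_adj_iff_exists.1 hab
  obtain ⟨j, l, hjl⟩ := completeBipartiteGraph_adj_iff_exists.1 hcd
  have hkl : k ≠ l := by
    rintro rfl
    have hleft : Sum.inr k ∈ ({a, b} : Set (α ⊕ Fin 2)) := by grind
    have hright : Sum.inr k ∈ ({c, d} : Set (α ⊕ Fin 2)) := by grind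
    exact (disjoint_iff_inter_eq_empty.2 hdisj).notMem_of_mem_left hleft hright
  rw [hik, hjl]
  obtain ⟨rfl, rfl⟩ | ⟨rfl, rfl⟩ : (k = 0 ∧ l = 1) ∨ (k = 1 ∧ l = 0) := by omega
  · exact ⟨(i, j), rfl⟩
  · exact ⟨(j, i), Sym2.eq_swap⟩

theorem edgePair_mem_linkedPairs_iff (hf : Injective f) {ij : α × α} :
    edgePair ij ∈ linkedPairs (completeBipartiteGraph α (Fin 2)) f ↔
      ij.1 ≠ ij.2 ∧ NonSplitLink f (.inl ij.1) (.inr 0) (.inl ij.2) (.inr 1) := by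
  rw [edgePair, mk_mem_linkedPairs_iff hf]
  simp [eq_comm]

theorem ncard_linkedPairs_modEq_choose_two [Fintype α] (hα : Odd (Fintype.card α))
    (hf : Injective f) :
    (linkedPairs (completeBipartiteGraph α (Fin 2)) f).ncard ≡
      (Fintype.card α).choose 2 [MOD 2] := by
  classical
  have hpreimage : edgePair ⁻¹' linkedPairs (completeBipartiteGraph α (Fin 2)) f =
      ↑{p ∈ (Finset.univ : Finset α).offDiag |
        NonSplitLink f (.inl p.1) (.inr 0) (.inl p.2) (.inr 1)} := by
    ext p
    simp [edgePair_mem_linkedPairs_iff hf]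
  rw [← ncard_preimage_of_injective_subset_range edgePair_injective
    linkedPairs_subset_range_edgePair, hpreimage, ncard_coe_finset]
  apply card_offDiag_filter_modEq_choose_two hα
    (P := fun i j ↦ NonSplitLink f (.inl i) (.inr 0) (.inl j) (.inr 1))
    fun i ↦ Complex.arg (f (.inl i)) ∈
      uIoo (Complex.arg (f (.inr 0))) (Complex.arg (f (.inr 1)))
  intro i _ j _ hij
  rw [← nonSplitLink_iff_xor_arg_mem_uIoo hf Sum.inl_ne_inr Sum.inl_ne_inr Sum.inl_ne_inr
    Sum.inl_ne_inr]
  exact xor_nonSplitLink_matchings hf (by simpa) (by simp) (by simp) (by simp) (by simp) (by simp)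

end CompleteBipartite

theorem K32_link_count_parity_invariant_under_transposition_general {α : Type*} [Fintype α]
    (hα : Odd (Fintype.card α)) {f g : α ⊕ Fin 2 → Circle} (hf : Injective f)
    (hg : Injective g) :
    (linkedPairs (completeBipartiteGraph α (Fin 2)) f).ncard % 2 =
      (linkedPairs (completeBipartiteGraph α (Fin 2)) g).ncard % 2 :=
  (ncard_linkedPairs_modEq_choose_two hα hf).trans (ncard_linkedPairs_modEq_choose_two hα hg).symm

theorem K32_link_count_parity_invariant_under_transposition
    (f g : Fin 3 ⊕ Fin 2 → Circle)
    (hf : Function.Injective f) (hg : Function.Injective g)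
    (u v : Fin 3 ⊕ Fin 2) (huv : u ≠ v)
    (hfg : g = f ∘ (Equiv.swap u v)) :
    (linkedPairs (completeBipartiteGraph (Fin 3) (Fin 2)) f).ncard % 2 =
      (linkedPairs (completeBipartiteGraph (Fin 3) (Fin 2)) g).ncard % 2 :=
  K32_link_count_parity_invariant_under_transposition_general (by decide) hf hg
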